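/- Let β > 1 and let T : [0,1) → [0,1) be the β-transformation T(x) = βx (mod 1). If φ : [0,1) → ℝ is C^k and φ = χ ∘ T − χ for some measurable function χ : [0,1) → ℝ with e^{−χ} ∈ L¹(m), then there exists a function χ₀ : [0,1) → ℝ which is C^k on (0,1) such that χ₀ = χ almost everywhere with respect to Lebesgue measure m. -/

import Mathlib

/-!
The cohomological equation holds at *every* point of `[0,1)` and `χ` is Borel, so Baire category
applies, and it yields continuity of a solution for every `k`, including `k = 0`.

Near `0` the map is `x ↦ β x`, so the inverse branch `x ↦ x / β` gives
`χ x = χ (x / β ^ n) + ∑_{i=1}^{n} φ (x / β ^ i)` on `(0,1)`. It therefore suffices to understand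
`χ` near `0`. A Borel function is nearly constant on a residual part of some interval
(`exists_Ioo_generic_close`). Small generic oscillation is preserved by each branch
`x ↦ β x - j`, and an interval on which it holds grows by the factor `β` until it contains a
break point `j / β` (`exists_node`). The branch to the right of that point starts at `0`, so `χ`
has a limit `L` at `0⁺` along residual sets (`exists_generic_limit`). Hence the partial sums
above are uniformly Cauchy on a dense subset of `(0,1)`, thus on `(0,1)`; their limit `g` is
continuous, equals `χ - L` generically, and solves the same cohomological equation
(`exists_continuous_solution`). Differentiating the series termwise gains factors `β ^ (-i)`, so
`g` is `C^k` (`contDiffOn_of_tendsto_sum`).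

It remains to see that the invariant function `χ - g` is constant almost everywhere. For a
bounded invariant `u` of mean zero, the primitive `F z = ∫₀ᶻ u` satisfies `F z = F (T z) / β`,
because each full branch contributes zero; iterating gives `F = 0`
(`ae_const_of_branch_invariant`).
-/

open MeasureTheory Set Filter Topology

noncomputable section

/-- The unit interval `[0,1)`. -/
def unitI : Set ℝ := Set.Ico 0 1

/-! ### Ergodicity -/

/-- Ergodicity of the `β`-transformation with respect to Lebesgue measure, for bounded functions.
Invariance is expressed on the open branches `x ↦ β x - j`. -/
theorem ae_const_of_branch_invariant {β : ℝ} (hβ : 1 < β) {u : ℝ → ℝ} (hu : Measurable u)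
    {M : ℝ} (hM : ∀ x, |u x| ≤ M)
    (hinv : ∀ j : ℤ, ∀ x ∈ Ioo (0 : ℝ) 1, β * x - j ∈ Ioo (0 : ℝ) 1 → u (β * x - j) = u x) :
    ∃ c, ∀ᵐ x : ℝ, x ∈ Ioo (0 : ℝ) 1 → u x = c := by
  have hβ0 : 0 < β := by linarith
  set c : ℝ := ∫ x in (0 : ℝ)..1, u x with hc
  have hui : ∀ a b : ℝ, IntervalIntegrable u volume a b := fun a b =>
    (intervalIntegrable_const (c := M)).mono_fun hu.aestronglyMeasurable
      (Eventually.of_forall fun x => by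
        simpa using (hM x).trans (le_abs_self M))
  set v : ℝ → ℝ := fun x => u x - c with hv
  have hvi : ∀ a b : ℝ, IntervalIntegrable v volume a b := fun a b =>
    (hui a b).sub intervalIntegrable_const
  set F : ℝ → ℝ := fun z => ∫ x in (0 : ℝ)..z, v x with hF
  have hF0 : F 0 = 0 := by simp [hF]
  have hF1 : F 1 = 0 := by
    simp only [hF, hv]
    rw [intervalIntegral.integral_sub (hui _ _) intervalIntegrable_const]
    simp [hc]
  -- the primitive over one branch is a rescaled copy of the whole primitive
  have hbranch : ∀ j : ℕ, ∀ z : ℝ, (j : ℝ) / β ≤ z → z ≤ 1 → β * z - j ≤ 1 →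
      F z = F (j / β) + β⁻¹ * F (β * z - j) := by
    intro j z hjz hz1 hz2
    have hj0 : (0 : ℝ) ≤ j / β := by positivity
    have hsplit : F z = F (j / β) + ∫ x in (j / β : ℝ)..z, v x :=
      (intervalIntegral.integral_add_adjacent_intervals (hvi _ _) (hvi _ _)).symm
    have hcongr : ∫ x in (j / β : ℝ)..z, v x = ∫ x in (j / β : ℝ)..z, v (β * x - j) := by
      apply intervalIntegral.integral_congr_Ioo_of_le hjz
      intro x hx
      have h1 : (j : ℝ) < β * x := by
        have := hx.1
        rw [div_lt_iff₀ hβ0] at this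
        linarith
      have h2 : β * x < β * z := mul_lt_mul_of_pos_left hx.2 hβ0
      have := hinv j x ⟨hj0.trans_lt hx.1, hx.2.trans_le hz1⟩
        ⟨by push_cast; linarith, by push_cast; linarith⟩
      simp only [hv]
      push_cast at this
      rw [this]
    rw [hsplit, hcongr, intervalIntegral.integral_comp_mul_sub _ hβ0.ne']
    have : β * (j / β) - j = 0 := by field_simp; ring
    rw [this, smul_eq_mul]
  have hnode : ∀ j : ℕ, (j : ℝ) / β ≤ 1 → F (j / β) = 0 := by
    intro j
    induction j with
    | zero => intro _; simpa using hF0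
    | succ j ih =>
      intro hj
      have hle : (j : ℝ) / β ≤ ((j + 1 : ℕ) : ℝ) / β := by
        gcongr; norm_num
      have he : β * (((j + 1 : ℕ) : ℝ) / β) - j = 1 := by
        push_cast; field_simp; ring
      rw [hbranch j _ hle hj he.le, ih (hle.trans hj), he, hF1]
      simp
  have hrec : ∀ z ∈ Icc (0 : ℝ) 1, ∃ w ∈ Icc (0 : ℝ) 1, F z = β⁻¹ * F w := by
    intro z hz
    have hz0 : 0 ≤ β * z := mul_nonneg hβ0.le hz.1
    have h1 := Nat.floor_le hz0
    have h2 := (Nat.lt_floor_add_one (β * z)).le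
    have h3 : ((⌊β * z⌋₊ : ℕ) : ℝ) / β ≤ z := by
      rw [div_le_iff₀ hβ0]; linarith
    refine ⟨β * z - ⌊β * z⌋₊, ⟨by linarith, by linarith⟩, ?_⟩
    rw [hbranch _ z h3 hz.2 (by linarith), hnode _ (h3.trans hz.2), zero_add]
  have hFc : Continuous F := intervalIntegral.continuous_primitive hvi 0
  obtain ⟨K, hK⟩ := isCompact_Icc.exists_bound_of_continuousOn (hFc.continuousOn (s := Icc 0 1))
  have hdecay : ∀ n : ℕ, ∀ z ∈ Icc (0 : ℝ) 1, |F z| ≤ (β⁻¹) ^ n * K := by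
    intro n
    induction n with
    | zero => intro z hz; simpa using hK z hz
    | succ n ih =>
      intro z hz
      obtain ⟨w, hw, hzw⟩ := hrec z hz
      rw [hzw, abs_mul, abs_of_pos (inv_pos.2 hβ0), pow_succ', mul_assoc]
      exact mul_le_mul_of_nonneg_left (ih w hw) (inv_pos.2 hβ0).le
  have hzero : ∀ z ∈ Icc (0 : ℝ) 1, F z = 0 := by
    intro z hz
    have ht : Tendsto (fun n : ℕ => (β⁻¹) ^ n * K) atTop (𝓝 (0 * K)) :=
      (tendsto_pow_atTop_nhds_zero_of_lt_one (inv_pos.2 hβ0).le (inv_lt_one_of_one_lt₀ hβ)).mul_const K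
    have := ge_of_tendsto' ht (fun n => hdecay n z hz)
    rw [zero_mul] at this
    exact abs_nonpos_iff.1 this
  have hloc : LocallyIntegrable v volume := by
    rw [locallyIntegrable_iff]
    intro k hk
    refine Measure.integrableOn_of_bounded (M := M + |c|) hk.measure_lt_top.ne
      (hu.sub_const c).aestronglyMeasurable (Eventually.of_forall fun x => ?_)
    exact (abs_sub _ _).trans (by have := hM x; linarith)
  refine ⟨c, ?_⟩
  filter_upwards [LocallyIntegrable.ae_hasDerivAt_integral hloc] with x hx hxI
  have h1 : HasDerivAt F (v x) x := hx 0
  have h2 : F =ᶠ[𝓝 x] fun _ => 0 := by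
    filter_upwards [Ioo_mem_nhds hxI.1 hxI.2] with z hz using hzero z ⟨hz.1.le, hz.2.le⟩
  have h3 : v x = 0 := (h1.congr_of_eventuallyEq h2.symm).unique (hasDerivAt_const x 0)
  exact sub_eq_zero.1 h3

/-! ### Regularity of the series along the branch at `0` -/

/-- The weights `a ^ ((i + 1) r)` make the statement stable under differentiation, which replaces
`(r, f)` by `(r + 1, f')`; continuity of `g` has to be assumed since the series need not converge
absolutely when `r = 0` and `f` is merely continuous. -/
theorem contDiffOn_of_tendsto_sum {a : ℝ} (ha0 : 0 < a) (ha1 : a < 1) (k : ℕ) :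
    ∀ (r : ℕ) (f g : ℝ → ℝ), ContDiffOn ℝ k f (Ico 0 1) → ContinuousOn g (Ioo 0 1) →
      (∀ x ∈ Ioo (0 : ℝ) 1, Tendsto
        (fun n => ∑ i ∈ Finset.range n, (a ^ (i + 1)) ^ r * f (a ^ (i + 1) * x)) atTop (𝓝 (g x))) →
      ContDiffOn ℝ k g (Ioo 0 1) := by
  induction k with
  | zero => intro r f g _ hg _; simpa [contDiffOn_zero] using hg
  | succ k ih =>
    intro r f g hf hg hlim
    have hud : UniqueDiffOn ℝ (Ico (0 : ℝ) 1) := uniqueDiffOn_Ico 0 1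
    rw [show ((k + 1 : ℕ) : WithTop ℕ∞) = (k : WithTop ℕ∞) + 1 by norm_cast] at hf ⊢
    obtain ⟨hdiff, -, hf'⟩ := (contDiffOn_succ_iff_derivWithin hud).1 hf
    set f' := derivWithin f (Ico 0 1) with hf'def
    have hpow : ∀ i : ℕ, a ^ (i + 1) ≤ a := fun i =>
      (pow_le_pow_of_le_one ha0.le ha1.le (by omega : 1 ≤ i + 1)).trans_eq (pow_one a)
    have hmem : ∀ i : ℕ, ∀ x ∈ Ioo (0 : ℝ) 1, a ^ (i + 1) * x ∈ Ioo (0 : ℝ) a := by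
      intro i x hx
      have hp : 0 < a ^ (i + 1) := pow_pos ha0 _
      refine ⟨mul_pos hp hx.1, ?_⟩
      calc a ^ (i + 1) * x < a ^ (i + 1) * 1 := mul_lt_mul_of_pos_left hx.2 hp
        _ ≤ a := by rw [mul_one]; exact hpow i
    have hsub : Icc (0 : ℝ) a ⊆ Ico 0 1 := fun x hx => ⟨hx.1, hx.2.trans_lt ha1⟩
    obtain ⟨K, hK⟩ := isCompact_Icc.exists_bound_of_continuousOn (hf'.continuousOn.mono hsub)
    have hterm : ∀ i : ℕ, ∀ x ∈ Ioo (0 : ℝ) 1,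
        ‖(a ^ (i + 1)) ^ (r + 1) * f' (a ^ (i + 1) * x)‖ ≤ a ^ (i + 1) * K := by
      intro i x hx
      have hm := hmem i x hx
      have hp : 0 < a ^ (i + 1) := pow_pos ha0 _
      have hb := hK _ ⟨hm.1.le, hm.2.le⟩
      rw [norm_mul, Real.norm_of_nonneg (by positivity)]
      have h1 : (a ^ (i + 1)) ^ (r + 1) ≤ a ^ (i + 1) :=
        (pow_le_pow_of_le_one hp.le ((hpow i).trans ha1.le)
          (by omega : 1 ≤ r + 1)).trans_eq (pow_one _)
      exact mul_le_mul h1 hb (norm_nonneg _) hp.le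
    have hsum : Summable fun i : ℕ => a ^ (i + 1) * K :=
      (((summable_nat_add_iff 1).2 (summable_geometric_of_lt_one ha0.le ha1))).mul_right K
    have hunif := tendstoUniformlyOn_tsum_nat hsum hterm
    set g' : ℝ → ℝ := fun x => ∑' i : ℕ, (a ^ (i + 1)) ^ (r + 1) * f' (a ^ (i + 1) * x) with hg'
    have hcont' : ∀ i : ℕ, ContinuousOn
        (fun x => (a ^ (i + 1)) ^ (r + 1) * f' (a ^ (i + 1) * x)) (Ioo 0 1) := fun i =>
      continuousOn_const.mul (hf'.continuousOn.comp (by fun_prop)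
        fun x hx => hsub ⟨(hmem i x hx).1.le, (hmem i x hx).2.le⟩)
    have hg'c : ContinuousOn g' (Ioo 0 1) := continuousOn_tsum hcont' hsum hterm
    have hg'k : ContDiffOn ℝ k g' (Ioo 0 1) :=
      ih (r + 1) f' g' hf' hg'c fun x hx => hunif.tendsto_at hx
    have hder : ∀ x ∈ Ioo (0 : ℝ) 1, HasDerivAt g (g' x) x := by
      intro x hx
      refine hasDerivAt_of_tendstoUniformlyOn isOpen_Ioo hunif
        (Eventually.of_forall fun n y hy => ?_) hlim hx
      apply HasDerivAt.fun_sum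
      intro i _
      have hm := hmem i y hy
      have hd : HasDerivAt f (f' (a ^ (i + 1) * y)) (a ^ (i + 1) * y) :=
        (hdiff _ (hsub ⟨hm.1.le, hm.2.le⟩)).hasDerivWithinAt.hasDerivAt
          (Ico_mem_nhds hm.1 (hm.2.trans ha1))
      have hl : HasDerivAt (fun y : ℝ => a ^ (i + 1) * y) (a ^ (i + 1)) y := by
        simpa using (hasDerivAt_id y).const_mul (a ^ (i + 1))
      have he : (a ^ (i + 1)) ^ (r + 1) * f' (a ^ (i + 1) * y) =
          (a ^ (i + 1)) ^ r * (f' (a ^ (i + 1) * y) * a ^ (i + 1)) := by ring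
      rw [he]
      exact (hd.comp y hl).const_mul ((a ^ (i + 1)) ^ r)
    rw [contDiffOn_succ_iff_deriv_of_isOpen isOpen_Ioo]
    exact ⟨fun x hx => (hder x hx).differentiableAt.differentiableWithinAt, by simp,
      hg'k.congr fun x hx => (hder x hx).deriv⟩

/-! ### Generic behaviour of Borel solutions -/

theorem tendsto_affine_residual {b : ℝ} (hb : b ≠ 0) (d : ℝ) :
    Tendsto (fun x : ℝ => b * x + d) (residual ℝ) (residual ℝ) := by
  exact tendsto_residual_of_isOpenMap (by fun_prop)
    ((Homeomorph.mulLeft₀ b hb).trans (Homeomorph.addRight d)).isOpenMap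

theorem neBot_nhds_inf_residual (x : ℝ) : NeBot (𝓝 x ⊓ residual ℝ) := by
  rw [inf_neBot_iff]
  intro s hs t ht
  rw [inter_comm]
  exact (dense_of_mem_residual ht).inter_nhds_nonempty hs

theorem neBot_nhdsGT_inf_residual : NeBot (𝓝[>] (0 : ℝ) ⊓ residual ℝ) := by
  rw [inf_neBot_iff]
  intro s hs t ht
  obtain ⟨q, hq, hqs⟩ := mem_nhdsGT_iff_exists_Ioo_subset.1 hs
  obtain ⟨y, hy, hyt⟩ := (dense_of_mem_residual ht).inter_open_nonempty (Ioo 0 q) isOpen_Ioo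
    (nonempty_Ioo.2 hq)
  exact ⟨y, hqs hy, hyt⟩

/-- A Borel function is within `ε` of a constant on a residual part of some interval. -/
theorem exists_Ioo_generic_close {χ : ℝ → ℝ} (hχ : Measurable χ) {ε : ℝ} (hε : 0 < ε) :
    ∃ p q c : ℝ, p < q ∧ Ioo p q ⊆ Ioo 0 1 ∧
      ∀ᶠ y in residual ℝ, y ∈ Ioo p q → |χ y - c| < ε := by
  have hA : ∀ c : ℚ, ∃ U : Set ℝ, IsOpen U ∧ {y | |χ y - c| < ε} =ᶠ[residual ℝ] U := fun c =>
    (measurableSet_lt (by fun_prop) measurable_const).residualEq_isOpen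
  choose U hUo hU using hA
  by_cases hne : ∃ c, (U c ∩ Ioo 0 1).Nonempty
  · obtain ⟨c, x, hx⟩ := hne
    obtain ⟨p, q, hpq, hsub⟩ :=
      mem_nhds_iff_exists_Ioo_subset.1 (((hUo c).inter isOpen_Ioo).mem_nhds hx)
    refine ⟨p, q, c, hpq.1.trans hpq.2, fun y hy => (hsub hy).2, ?_⟩
    filter_upwards [(hU c).mem_iff] with y hy hyI using hy.2 (hsub hyI).1
  · exfalso
    push Not at hne
    have hall : ∀ᶠ y in residual ℝ, ∀ c : ℚ, (y ∈ {y | |χ y - c| < ε} ↔ y ∈ U c) :=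
      eventually_countable_forall.2 fun c => (hU c).mem_iff
    obtain ⟨y, hyI, hy⟩ := (dense_of_mem_residual hall).inter_open_nonempty (Ioo 0 1) isOpen_Ioo
      (nonempty_Ioo.2 one_pos)
    obtain ⟨c, hc1, hc2⟩ := exists_rat_btwn (show χ y - ε < χ y by linarith)
    have : y ∈ U c ∩ Ioo 0 1 :=
      ⟨(hy c).1 (show |χ y - c| < ε by rw [abs_lt]; constructor <;> linarith), hyI⟩
    rw [hne c] at this
    exact this

/-- On a residual part of some neighbourhood of `x`, the function `χ` stays within some `ε' < ε`
of a constant. The strict inequality leaves room for the variation of `φ` under one iteration. -/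
def GenericOscLT (χ : ℝ → ℝ) (ε x : ℝ) : Prop :=
  ∃ ε' < ε, ∃ c, ∀ᶠ y in 𝓝 x ⊓ residual ℝ, |χ y - c| < ε'

/-- Small generic oscillation at `x` passes to the image `β x - j`. The filter `l` is either the
full neighbourhood filter of the image or, when the image is the end point `0`, the right one. -/
theorem generic_step {β : ℝ} (hβ : 1 < β) {φ χ : ℝ → ℝ} (hφ : ContinuousOn φ (Ico 0 1))
    (hcoh : ∀ j : ℤ, ∀ x ∈ Ioo (0 : ℝ) 1, β * x - j ∈ Ioo (0 : ℝ) 1 → χ (β * x - j) = χ x + φ x)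
    {ε x : ℝ} (hx : x ∈ Ioo (0 : ℝ) 1) (h : GenericOscLT χ ε x) (j : ℤ)
    (l : Filter ℝ) (hl : l ≤ 𝓝 (β * x - j)) (hl' : ∀ᶠ z in l, z ∈ Ioo (0 : ℝ) 1) :
    ∃ ε' < ε, ∃ c, ∀ᶠ z in l ⊓ residual ℝ, |χ z - c| < ε' := by
  obtain ⟨ε', hε', c, hc⟩ := h
  have hβ0 : 0 < β := by linarith
  refine ⟨(ε' + ε) / 2, by linarith, c + φ x, ?_⟩
  have hcont : Continuous fun z : ℝ => β⁻¹ * z + β⁻¹ * j := by fun_prop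
  have hval : β⁻¹ * (β * x - j) + β⁻¹ * j = x := by field_simp; ring
  have ht1 : Tendsto (fun z : ℝ => β⁻¹ * z + β⁻¹ * j) l (𝓝 x) := by
    have := hcont.tendsto (β * x - j)
    rw [hval] at this
    exact this.mono_left hl
  have ht : Tendsto (fun z : ℝ => β⁻¹ * z + β⁻¹ * j) (l ⊓ residual ℝ) (𝓝 x ⊓ residual ℝ) :=
    ht1.inf (tendsto_affine_residual (inv_ne_zero hβ0.ne') _)
  have hφx : ∀ᶠ y in 𝓝 x, |φ y - φ x| < (ε - ε') / 2 := by
    have := (hφ.continuousAt (Ico_mem_nhds hx.1 hx.2))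
    exact (Metric.tendsto_nhds.1 this) _ (by linarith)
  filter_upwards [ht.eventually hc, (ht1.eventually hφx).filter_mono inf_le_left,
    (ht1.eventually (Ioo_mem_nhds hx.1 hx.2)).filter_mono inf_le_left,
    hl'.filter_mono inf_le_left] with z h1 h2 h3 h4
  have he : β * (β⁻¹ * z + β⁻¹ * j) - j = z := by field_simp; ring
  have := hcoh j _ h3 (by rw [he]; exact h4)
  rw [he] at this
  rw [this]
  rw [abs_lt] at *
  constructor <;> linarith [h1.1, h1.2, h2.1, h2.2]

/-- An interval of small generic oscillation expands until it contains a break point `j / β` in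
its interior, since otherwise its length would exceed `1`. -/
theorem exists_node {β : ℝ} (hβ : 1 < β) {φ χ : ℝ → ℝ} (hφ : ContinuousOn φ (Ico 0 1))
    (hcoh : ∀ j : ℤ, ∀ x ∈ Ioo (0 : ℝ) 1, β * x - j ∈ Ioo (0 : ℝ) 1 → χ (β * x - j) = χ x + φ x)
    {ε : ℝ} (n : ℕ) : ∀ p q : ℝ, p < q → Ioo p q ⊆ Ioo 0 1 →
      (∀ x ∈ Ioo p q, GenericOscLT χ ε x) → 1 < β ^ n * (q - p) →
      ∃ j : ℤ, ∃ x ∈ Ioo (0 : ℝ) 1, β * x = j ∧ GenericOscLT χ ε x := by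
  have hβ0 : 0 < β := by linarith
  induction n with
  | zero =>
    intro p q hpq hsub _ hlen
    obtain ⟨hp, hq⟩ := (Ioo_subset_Ioo_iff hpq).1 hsub
    simp at hlen
    linarith
  | succ n ih =>
    intro p q hpq hsub hU hlen
    by_cases hnode : ∃ j : ℤ, ∃ x ∈ Ioo p q, β * x = j
    · obtain ⟨j, x, hx, hj⟩ := hnode
      exact ⟨j, x, hsub hx, hj, hU x hx⟩
    · push Not at hnode
      set j : ℤ := ⌊β * p⌋ with hj
      have hj1 : (j : ℝ) ≤ β * p := Int.floor_le _
      have hj2 : β * p < j + 1 := Int.lt_floor_add_one _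
      have hj3 : β * q ≤ j + 1 := by
        by_contra hcon
        push Not at hcon
        refine hnode (j + 1) ((j + 1) / β) ⟨?_, ?_⟩ ?_
        · rw [lt_div_iff₀ hβ0]; linarith
        · rw [div_lt_iff₀ hβ0]; linarith
        · push_cast; field_simp
      have hβpq : β * p < β * q := mul_lt_mul_of_pos_left hpq hβ0
      refine ih (β * p - j) (β * q - j) (by linarith)
        (Ioo_subset_Ioo (by linarith) (by linarith)) ?_ ?_
      · intro z hz
        have hx : (z + j) / β ∈ Ioo p q := by
          constructor
          · rw [lt_div_iff₀ hβ0]; linarith [hz.1]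
          · rw [div_lt_iff₀ hβ0]; linarith [hz.2]
        have hz' : β * ((z + j) / β) - j = z := by field_simp; ring
        refine generic_step hβ hφ hcoh (hsub hx) (hU _ hx) j (𝓝 z) (by rw [hz']) ?_
        exact Ioo_mem_nhds (by linarith [hz.1]) (by linarith [hz.2])
      · calc 1 < β ^ (n + 1) * (q - p) := hlen
          _ = β ^ n * (β * q - j - (β * p - j)) := by ring

/-- `χ` has a limit at `0⁺` along residual sets. -/
theorem exists_generic_limit {β : ℝ} (hβ : 1 < β) {φ χ : ℝ → ℝ} (hφ : ContinuousOn φ (Ico 0 1))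
    (hχ : Measurable χ)
    (hcoh : ∀ j : ℤ, ∀ x ∈ Ioo (0 : ℝ) 1, β * x - j ∈ Ioo (0 : ℝ) 1 → χ (β * x - j) = χ x + φ x) :
    ∃ L, Tendsto χ (𝓝[>] (0 : ℝ) ⊓ residual ℝ) (𝓝 L) := by
  have := neBot_nhdsGT_inf_residual
  apply cauchy_map_iff_exists_tendsto.1
  rw [Metric.cauchy_iff]
  refine ⟨inferInstance, fun ε hε => ?_⟩
  obtain ⟨p, q, c, hpq, hsub, hc⟩ := exists_Ioo_generic_close hχ (show 0 < ε / 4 by linarith)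
  obtain ⟨n, hn⟩ := pow_unbounded_of_one_lt (1 / (q - p)) hβ
  have hlen : 1 < β ^ n * (q - p) := by
    rwa [div_lt_iff₀ (by linarith)] at hn
  have hU : ∀ x ∈ Ioo p q, GenericOscLT χ (ε / 2) x := fun x hx =>
    ⟨ε / 4, by linarith, c, by
      filter_upwards [mem_inf_of_left (Ioo_mem_nhds hx.1 hx.2), hc.filter_mono inf_le_right]
        with y hy hy' using hy' hy⟩
  obtain ⟨j, x, hx, hj, hosc⟩ := exists_node hβ hφ hcoh n p q hpq hsub hU hlen
  obtain ⟨ε', hε', d, hd⟩ := generic_step hβ hφ hcoh hx hosc j (𝓝[>] 0)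
    (by rw [hj, sub_self]; exact nhdsWithin_le_nhds) (Ioo_mem_nhdsGT one_pos)
  refine ⟨Metric.ball d (ε / 2), ?_, fun y hy z hz => ?_⟩
  · rw [mem_map]
    filter_upwards [hd] with z hz
    exact hz.trans hε'
  · rw [Metric.mem_ball] at hy hz
    have := dist_triangle_right y z d
    linarith

/-- The sums of `φ` along the backward orbit `x / β ^ i` converge to a continuous solution of
the cohomological equation. -/
theorem exists_continuous_solution {β : ℝ} (hβ : 1 < β) {φ χ : ℝ → ℝ}
    (hφ : ContinuousOn φ (Ico 0 1)) (hχ : Measurable χ)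
    (hcoh : ∀ j : ℤ, ∀ x ∈ Ioo (0 : ℝ) 1, β * x - j ∈ Ioo (0 : ℝ) 1 → χ (β * x - j) = χ x + φ x) :
    ∃ g : ℝ → ℝ, ContinuousOn g (Ioo 0 1) ∧
      (∀ x ∈ Ioo (0 : ℝ) 1, Tendsto
        (fun n => ∑ i ∈ Finset.range n, φ ((β⁻¹) ^ (i + 1) * x)) atTop (𝓝 (g x))) ∧
      ∀ j : ℤ, ∀ x ∈ Ioo (0 : ℝ) 1, β * x - j ∈ Ioo (0 : ℝ) 1 → g (β * x - j) = g x + φ x := by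
  have hβ0 : 0 < β := by linarith
  obtain ⟨L, hL⟩ := exists_generic_limit hβ hφ hχ hcoh
  set a : ℝ := β⁻¹ with ha
  have ha0 : 0 < a := inv_pos.2 hβ0
  have ha1 : a < 1 := inv_lt_one_of_one_lt₀ hβ
  have hmem : ∀ i : ℕ, ∀ x ∈ Ioo (0 : ℝ) 1, a ^ i * x ∈ Ioo (0 : ℝ) 1 := fun i x hx =>
    ⟨mul_pos (pow_pos ha0 i) hx.1,
      (mul_le_of_le_one_left hx.1.le (pow_le_one₀ ha0.le ha1.le)).trans_lt hx.2⟩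
  set S : ℕ → ℝ → ℝ := fun n x => ∑ i ∈ Finset.range n, φ (a ^ (i + 1) * x) with hS
  have hScont : ∀ n, ContinuousOn (S n) (Ioo 0 1) := fun n =>
    continuousOn_finsetSum _ fun i _ => hφ.comp (by fun_prop) fun x hx =>
      Ioo_subset_Ico_self (hmem _ x hx)
  -- telescoping along the inverse branch through the fixed point `0`
  have htel : ∀ n : ℕ, ∀ x ∈ Ioo (0 : ℝ) 1, χ x = χ (a ^ n * x) + S n x := by
    intro n x hx
    induction n with
    | zero => simp [hS]
    | succ n ih =>
      have he : β * (a ^ (n + 1) * x) - ((0 : ℤ) : ℝ) = a ^ n * x := by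
        rw [ha, pow_succ]; field_simp; simp
      have h1 := hcoh 0 _ (hmem (n + 1) x hx) (by rw [he]; exact hmem n x hx)
      rw [he] at h1
      have h2 : S (n + 1) x = S n x + φ (a ^ (n + 1) * x) := Finset.sum_range_succ _ _
      rw [ih, h1, h2]; ring
  -- generic closeness to `χ - L`, with a rank `N` uniform in `x`
  have hclose : ∀ ε > 0, ∃ N, ∀ᶠ x in residual ℝ, ∀ n ≥ N, x ∈ Ioo (0 : ℝ) 1 →
      |S n x - (χ x - L)| < ε := by
    intro ε hε
    obtain ⟨s, hs, t, ht, hst⟩ := mem_inf_iff_superset.1 (Metric.tendsto_nhds.1 hL ε hε)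
    obtain ⟨δ, hδ, hδs⟩ := mem_nhdsGT_iff_exists_Ioo_subset.1 hs
    obtain ⟨N, hN⟩ := exists_pow_lt_of_lt_one hδ ha1
    refine ⟨N, ?_⟩
    have hall : ∀ᶠ x in residual ℝ, ∀ n : ℕ, a ^ n * x + 0 ∈ t :=
      eventually_countable_forall.2 fun n =>
        (tendsto_affine_residual (pow_pos ha0 n).ne' 0).eventually ht
    filter_upwards [hall] with x hx n hn hxI
    have h1 : a ^ n * x ∈ Ioo 0 δ := by
      refine ⟨(hmem n x hxI).1, ?_⟩
      calc a ^ n * x ≤ a ^ n * 1 := by gcongr; exact hxI.2.le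
        _ ≤ a ^ N := by rw [mul_one]; exact pow_le_pow_of_le_one ha0.le ha1.le hn
        _ < δ := hN
    have h2 : dist (χ (a ^ n * x)) L < ε :=
      hst ⟨hδs h1, by simpa using hx n⟩
    rw [Real.dist_eq, abs_sub_comm] at h2
    rw [htel n x hxI]
    convert h2 using 2
    ring
  have hUC : UniformCauchySeqOn S atTop (Ioo 0 1) := by
    rw [Metric.uniformCauchySeqOn_iff]
    intro ε hε
    obtain ⟨N, hN⟩ := hclose (ε / 4) (by linarith)
    refine ⟨N, fun m hm n hn x hx => ?_⟩
    have hI := Ioo_mem_nhds hx.1 hx.2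
    have hc : Tendsto (fun y => dist (S m y) (S n y)) (𝓝 x ⊓ residual ℝ)
        (𝓝 (dist (S m x) (S n x))) :=
      (Tendsto.dist ((hScont m).continuousAt hI) ((hScont n).continuousAt hI)).mono_left
        inf_le_left
    have := neBot_nhds_inf_residual x
    have hle : dist (S m x) (S n x) ≤ ε / 2 := by
      refine le_of_tendsto hc ?_
      filter_upwards [mem_inf_of_left hI, hN.filter_mono inf_le_right] with y hy hy'
      have h1 := hy' m hm hy
      have h2 := hy' n hn hy
      rw [← Real.dist_eq] at h1 h2
      have := dist_triangle_right (S m y) (S n y) (χ y - L)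
      linarith
    linarith
  have hlim : ∀ x ∈ Ioo (0 : ℝ) 1, ∃ y, Tendsto (fun n => S n x) atTop (𝓝 y) := fun x hx =>
    cauchySeq_tendsto_of_complete (hUC.cauchySeq hx)
  choose! g hg using hlim
  have hunif : TendstoUniformlyOn S g atTop (Ioo 0 1) := hUC.tendstoUniformlyOn_of_tendsto hg
  have hgc : ContinuousOn g (Ioo 0 1) :=
    hunif.continuousOn (Frequently.of_forall hScont)
  have hgen : ∀ᶠ x in residual ℝ, x ∈ Ioo (0 : ℝ) 1 → g x = χ x - L := by
    have h1 : ∀ m : ℕ, ∃ N, ∀ᶠ x in residual ℝ, ∀ n ≥ N, x ∈ Ioo (0 : ℝ) 1 →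
        |S n x - (χ x - L)| < 1 / ((m : ℝ) + 1) := fun m => hclose _ (by positivity)
    choose N hN using h1
    filter_upwards [eventually_countable_forall.2 hN] with x hx hxI
    refine tendsto_nhds_unique (hg x hxI) (Metric.tendsto_atTop.2 fun ε hε => ?_)
    obtain ⟨m, hm⟩ := exists_nat_one_div_lt hε
    exact ⟨N m, fun n hn => (hx m n hn hxI).trans hm⟩
  refine ⟨g, hgc, hg, fun j x hx hjx => ?_⟩
  have := neBot_nhds_inf_residual x
  have hI := Ioo_mem_nhds hx.1 hx.2
  have hJ := Ioo_mem_nhds hjx.1 hjx.2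
  have hbr : Tendsto (fun y : ℝ => β * y - j) (𝓝 x) (𝓝 (β * x - j)) :=
    (by fun_prop : Continuous fun y : ℝ => β * y - j).tendsto x
  have ht1 : Tendsto (fun y => g (β * y - j)) (𝓝 x ⊓ residual ℝ) (𝓝 (g (β * x - j))) :=
    ((hgc.continuousAt hJ).tendsto.comp hbr).mono_left inf_le_left
  have ht2 : Tendsto (fun y => g y + φ y) (𝓝 x ⊓ residual ℝ) (𝓝 (g x + φ x)) :=
    ((hgc.continuousAt hI).add (hφ.continuousAt (Ico_mem_nhds hx.1 hx.2))).tendsto.mono_left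
      inf_le_left
  refine tendsto_nhds_unique_of_eventuallyEq ht1 ht2 ?_
  have hres : ∀ᶠ y in residual ℝ, β * y + -(j : ℝ) ∈ Ioo (0 : ℝ) 1 →
      g (β * y + -(j : ℝ)) = χ (β * y + -(j : ℝ)) - L :=
    (tendsto_affine_residual hβ0.ne' _).eventually hgen
  filter_upwards [mem_inf_of_left hI, mem_inf_of_left (hbr hJ), hgen.filter_mono inf_le_right,
    hres.filter_mono inf_le_right] with y h1 h2 h3 h4
  rw [← sub_eq_add_neg] at h4
  rw [h4 h2, h3 h1, hcoh j y h1 h2]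
  ring
/-- Corollary: for the `β`-transformation `T x = β x (mod 1)`, `β > 1`, if `φ` is `C^k`
and `φ = χ ∘ T - χ` for a measurable `χ` with `e^{-χ} ∈ L¹(m)`, then `χ` has a version
which is `C^k` on `(0,1)`. -/
theorem beta_transformation_livsic
    (β : ℝ) (hβ : 1 < β) (k : ℕ)
    (T : ℝ → ℝ) (hT : ∀ x ∈ unitI, T x = Int.fract (β * x))
    (φ χ : ℝ → ℝ) (hφ : ContDiffOn ℝ k φ unitI) (hχ : Measurable χ)
    (hcoh : ∀ x ∈ unitI, φ x = χ (T x) - χ x)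
    (hint : IntegrableOn (fun x => Real.exp (-χ x)) unitI volume) :
    ∃ χ₀ : ℝ → ℝ, ContDiffOn ℝ k χ₀ (Ioo 0 1) ∧
      χ₀ =ᵐ[volume.restrict unitI] χ := by
  have hβ0 : 0 < β := by linarith
  have hbranch : ∀ j : ℤ, ∀ x ∈ Ioo (0 : ℝ) 1, β * x - j ∈ Ioo (0 : ℝ) 1 →
      χ (β * x - j) = χ x + φ x := by
    intro j x hx hj
    have hxI : x ∈ unitI := Ioo_subset_Ico_self hx
    have hfr : Int.fract (β * x) = β * x - j :=
      Int.fract_eq_iff.2 ⟨hj.1.le, hj.2, j, by ring⟩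
    rw [hcoh x hxI, hT x hxI, hfr]
    ring
  obtain ⟨g, hgc, hglim, hgcoh⟩ :=
    exists_continuous_solution hβ hφ.continuousOn hχ hbranch
  have hgk : ContDiffOn ℝ k g (Ioo 0 1) :=
    contDiffOn_of_tendsto_sum (inv_pos.2 hβ0) (inv_lt_one_of_one_lt₀ hβ) k 0 φ g hφ hgc
      (by simpa using hglim)
  -- `χ - g` is invariant; `arctan` makes it bounded without losing information
  set g₁ : ℝ → ℝ := (Ioo (0 : ℝ) 1).piecewise g 0 with hg₁
  have hg₁m : Measurable g₁ :=
    hgc.measurable_piecewise continuousOn_const measurableSet_Ioo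
  have hg₁eq : ∀ x ∈ Ioo (0 : ℝ) 1, g₁ x = g x := fun x hx => piecewise_eq_of_mem _ _ _ hx
  obtain ⟨c, hc⟩ := ae_const_of_branch_invariant hβ (u := fun x => Real.arctan (χ x - g₁ x))
    (Real.measurable_arctan.comp (hχ.sub hg₁m)) (M := Real.pi / 2)
    (fun x => abs_le.2 ⟨(Real.neg_pi_div_two_lt_arctan _).le, (Real.arctan_lt_pi_div_two _).le⟩)
    (fun j x hx hj => by
      simp only [hg₁eq _ hx, hg₁eq _ hj, hbranch j x hx hj, hgcoh j x hx hj]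
      congr 1
      ring)
  refine ⟨fun x => g x + Real.tan c, hgk.add contDiffOn_const, ?_⟩
  have hIoo : (volume : Measure ℝ).restrict unitI = volume.restrict (Ioo 0 1) :=
    Measure.restrict_congr_set Ioo_ae_eq_Ico.symm
  rw [hIoo]
  refine (ae_restrict_iff' measurableSet_Ioo).2 ?_
  filter_upwards [hc] with x hx hxI
  have := hx hxI
  simp only [hg₁eq x hxI] at this
  rw [← this, Real.tan_arctan]
  ring

end
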